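/- For all positive integers n, the double sum over integers i, j of binom(2n, n+i) * binom(2n, n+j) * |i^4 (i^2 - j^2)| equals (n^3 (10n^2 - 14n + 5) / (2n-1)) * binom(2n, n)^2. -/

import Mathlib

/-- Binomial coefficient `n.choose k` extended to an integer lower index,
vanishing when `k < 0` (and, as usual, when `k > n`). -/
def ichoose (n : ℕ) (k : ℤ) : ℤ := if 0 ≤ k then (n.choose k.toNat : ℤ) else 0

/-!
Folding `i` to `|i|` turns the sum into `∑ v k * v l * k ^ 4 * |k ^ 2 - l ^ 2|` over `k, l ≥ 0`,
where `v k` is `binom(2n, n + k)`, doubled for `k > 0`. With the alternating form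
`B(f, g) = ∑_{l < k} (f k * g l - f l * g k)` this is `B(k⁶v, v) - B(k⁴v, k²v)`.

Modulo differences `ΔF` of sequences vanishing at both ends, `k⁶v` and `k⁴v` reduce to combinations
of `k²v` and `v`, and `k²v` reduces to `n/2 * v`. The pairing of such a `ΔF` with `g` is the single
sum `-∑ (F k + F (k + 1)) * g k`, and `B` is alternating, so everything is expressed through the
moments `∑ k * v k ^ 2`, `∑ k ^ 3 * v k ^ 2` and `∑ k ^ 5 * v k ^ 2`, which telescope.
-/

open Finset
open scoped fwdDiff

lemma sum_range_sum_range_eq_sum_lt {M : Type*} [AddCommMonoid M] (N : ℕ) (h : ℕ → ℕ → M) :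
    ∑ k ∈ range N, ∑ l ∈ range N, h k l =
      ∑ k ∈ range N, (h k k + ∑ l ∈ range k, (h k l + h l k)) := by
  induction N with
  | zero => simp
  | succ N ih =>
    simp only [sum_range_succ _ N, sum_add_distrib] at ih ⊢
    rw [ih]
    abel

section SignForm

variable {R : Type*} [CommRing R]

/-- The alternating form `∑_{k, l < N} sign (k - l) * f k * g l`, which carries the sign of an
absolute value `|a k - a l|` with `a` monotone. The sum runs over `l < k` only, each term being
paired with its transpose. -/
def signForm (N : ℕ) : (ℕ → R) →ₗ[R] (ℕ → R) →ₗ[R] R :=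
  ∑ k ∈ range N, ∑ l ∈ range k,
    ((LinearMap.mul R R).compl₁₂ (LinearMap.proj k) (LinearMap.proj l) -
      (LinearMap.mul R R).compl₁₂ (LinearMap.proj l) (LinearMap.proj k))

lemma signForm_apply (N : ℕ) (f g : ℕ → R) :
    signForm N f g = ∑ k ∈ range N, ∑ l ∈ range k, (f k * g l - f l * g k) := by
  simp [signForm, LinearMap.sum_apply]

lemma signForm_isAlt (N : ℕ) : (signForm N : (ℕ → R) →ₗ[R] (ℕ → R) →ₗ[R] R).IsAlt := fun f ↦ by
  rw [signForm_apply]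
  exact sum_eq_zero fun _ _ ↦ sum_eq_zero fun _ _ ↦ by rw [mul_comm, sub_self]

lemma signForm_fwdDiff (N : ℕ) (F g : ℕ → R) :
    signForm N (Δ_[1] F) g = ∑ k ∈ range N, (F N + F 0 - (F k + F (k + 1))) * g k := by
  simp only [signForm_apply, fwdDiff]
  induction N with
  | zero => simp
  | succ N ih =>
    have telescope : ∑ l ∈ range N, (F (l + 1) - F l) = F N - F 0 := sum_range_sub F N
    have shift : ∑ k ∈ range N, (F (N + 1) + F 0 - (F k + F (k + 1))) * g k =
        ∑ k ∈ range N, (F N + F 0 - (F k + F (k + 1))) * g k +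
          (F (N + 1) - F N) * ∑ k ∈ range N, g k := by
      rw [mul_sum, ← sum_add_distrib]
      exact sum_congr rfl fun _ _ ↦ by ring
    rw [sum_range_succ, sum_range_succ, ih, sum_sub_distrib, ← mul_sum, ← sum_mul, telescope, shift]
    ring

lemma sum_sum_mul_abs_sub_eq_signForm [LinearOrder R] [IsStrictOrderedRing R] {a : ℕ → R}
    (ha : Monotone a) (N : ℕ) (f g : ℕ → R) :
    ∑ k ∈ range N, ∑ l ∈ range N, f k * g l * |a k - a l| =
      signForm N (a * f) g - signForm N f (a * g) := by
  rw [sum_range_sum_range_eq_sum_lt, signForm_apply, signForm_apply, ← sum_sub_distrib]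
  refine sum_congr rfl fun k _ ↦ ?_
  rw [sub_self, abs_zero, mul_zero, zero_add, ← sum_sub_distrib]
  refine sum_congr rfl fun l hl ↦ ?_
  have hlk : 0 ≤ a k - a l := sub_nonneg.2 (ha (mem_range.1 hl).le)
  rw [abs_sub_comm (a l), abs_of_nonneg hlk]
  simp only [Pi.mul_apply]
  ring

end SignForm

section FoldedChoose

/-- The central binomial row `binom(2n, n + i)` folded along `i ↦ |i|`: the total weight of the
integers of absolute value `k`. -/
def foldedChoose (n k : ℕ) : ℚ := (if k = 0 then 1 else 2) * (2 * n).choose (n + k)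

lemma foldedChoose_zero (n : ℕ) : foldedChoose n 0 = (2 * n).choose n := by
  simp [foldedChoose]

lemma ichoose_two_mul_add_natCast (n k : ℕ) :
    ichoose (2 * n) (n + k) = (2 * n).choose (n + k) := by
  rw [ichoose, if_pos (by positivity)]
  norm_cast

lemma ichoose_eq_zero_of_neg (n : ℕ) {k : ℤ} (h : k < 0) : ichoose n k = 0 :=
  if_neg h.not_ge

lemma ichoose_eq_zero_of_lt {n : ℕ} {k : ℤ} (h : n < k) : ichoose n k = 0 := by
  rw [ichoose, if_pos (by lia), Nat.choose_eq_zero_of_lt (by lia), Nat.cast_zero]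

lemma ichoose_symm (n : ℕ) (k : ℤ) : ichoose n (n - k) = ichoose n k := by
  rcases lt_or_ge k 0 with hk | hk
  · rw [ichoose_eq_zero_of_neg n hk, ichoose_eq_zero_of_lt (by lia)]
  rcases lt_or_ge (n : ℤ) k with hnk | hnk
  · rw [ichoose_eq_zero_of_lt hnk, ichoose_eq_zero_of_neg n (by lia)]
  · rw [ichoose, ichoose, if_pos (by lia), if_pos hk,
      Nat.choose_symm_of_eq_add (show n = k.toNat + ((n : ℤ) - k).toNat by lia)]

lemma ichoose_two_mul_add_neg (n : ℕ) (i : ℤ) :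
    ichoose (2 * n) (n + -i) = ichoose (2 * n) (n + i) := by
  rw [← ichoose_symm]
  congr 1
  push_cast
  ring

lemma support_ichoose_two_mul_subset (n : ℕ) :
    (Function.support fun i : ℤ ↦ ichoose (2 * n) (n + i)) ⊆ Icc (-n : ℤ) n := by
  intro i hi
  rw [coe_Icc, Set.mem_Icc]
  contrapose! hi
  rw [Function.notMem_support]
  rcases lt_or_ge i (-n) with hlt | hge
  · exact ichoose_eq_zero_of_neg _ (by lia)
  · exact ichoose_eq_zero_of_lt (by have := hi hge; lia)

lemma finsum_ichoose_mul_natAbs (n : ℕ) (φ : ℕ → ℚ) :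
    ∑ᶠ i : ℤ, (ichoose (2 * n) (n + i) : ℚ) * φ i.natAbs =
      ∑ k ∈ range (n + 1), foldedChoose n k * φ k := by
  set f : ℤ → ℚ := fun i ↦ ichoose (2 * n) (n + i) * φ i.natAbs with hf
  have f_even : f.Even := fun i ↦ by
    simp only [hf, ichoose_two_mul_add_neg, Int.natAbs_neg]
  have f_support : f.support ⊆ Icc (-n : ℤ) n := fun i hi ↦
    support_ichoose_two_mul_subset n fun h ↦ hi (by simp [hf, h])
  have f_natCast (k : ℕ) : f k = (2 * n).choose (n + k) * φ k := by
    simp only [hf, ichoose_two_mul_add_natCast, Int.natAbs_natCast, Int.cast_natCast]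
  have fold_zero : foldedChoose n 0 * φ 0 = f (0 : ℕ) := by
    rw [f_natCast, foldedChoose_zero, add_zero]
  have fold_succ (k : ℕ) : foldedChoose n (k + 1) * φ (k + 1) = 2 * f (k + 1 : ℕ) := by
    rw [f_natCast, foldedChoose, if_neg k.succ_ne_zero, mul_assoc]
  rw [finsum_eq_sum_of_support_subset _ f_support, sum_Icc_of_even_eq_range f_even,
    sum_range_succ', sum_range_succ', fold_zero, sum_congr rfl fun k _ ↦ fold_succ k, ← mul_sum]
  simp only [nsmul_eq_mul, Nat.cast_ofNat, Nat.cast_zero]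
  ring

lemma finsum_finsum_ichoose_mul_natAbs (n : ℕ) (φ : ℕ → ℕ → ℚ) :
    ∑ᶠ i : ℤ, ∑ᶠ j : ℤ, (ichoose (2 * n) (n + i) : ℚ) * (ichoose (2 * n) (n + j) : ℚ) *
        φ i.natAbs j.natAbs =
      ∑ k ∈ range (n + 1), ∑ l ∈ range (n + 1), foldedChoose n k * foldedChoose n l * φ k l := by
  simp only [mul_assoc, ← mul_finsum, ← mul_sum, finsum_ichoose_mul_natAbs,
    finsum_ichoose_mul_natAbs n fun k ↦ ∑ l ∈ range (n + 1), foldedChoose n l * φ k l]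

end FoldedChoose

section Flux

/-- The flux `(n - k + 1) * binom(2n, n + k - 1)` of the row `binom(2n, n + ·)` between `k - 1` and
`k`, set to `0` at `k = 0`. Polynomial multiples of it have as differences polynomial multiples of
`foldedChoose n`. -/
def flux (n : ℕ) : ℕ → ℚ
  | 0 => 0
  | k + 1 => (n - k) * (2 * n).choose (n + k)

lemma flux_zero (n : ℕ) : flux n 0 = 0 := rfl

lemma flux_one (n : ℕ) : flux n 1 = n * foldedChoose n 0 := by
  simp [flux, foldedChoose]

lemma flux_last (n : ℕ) : flux n (n + 1) = 0 := by simp [flux]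

lemma flux_succ_eq (n k : ℕ) : flux n (k + 1) = (n + (k + 1)) * (2 * n).choose (n + (k + 1)) := by
  have := Nat.choose_succ_right_eq (2 * n) (n + k)
  rcases le_or_gt k n with h | h
  · rw [show 2 * n - (n + k) = n - k by lia] at this
    rw [flux, ← Nat.cast_sub h]
    norm_cast
    lia
  · simp [flux, Nat.choose_eq_zero_of_lt (show 2 * n < n + k by lia),
      Nat.choose_eq_zero_of_lt (show 2 * n < n + (k + 1) by lia)]

lemma flux_add_flux_succ (n k : ℕ) : flux n k + flux n (k + 1) = n * foldedChoose n k := by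
  cases k with
  | zero => simp [flux, foldedChoose]
  | succ k =>
    rw [flux_succ_eq, flux, foldedChoose, if_neg k.succ_ne_zero]
    push_cast
    ring

lemma mul_flux_sub_flux_succ (n k : ℕ) :
    k * (flux n k - flux n (k + 1)) = k ^ 2 * foldedChoose n k := by
  cases k with
  | zero => simp
  | succ k =>
    rw [flux_succ_eq, flux, foldedChoose, if_neg k.succ_ne_zero]
    push_cast
    ring

lemma two_mul_mul_flux (n k : ℕ) : 2 * (k * flux n k) = k * (n + k) * foldedChoose n k := by
  linear_combination k * flux_add_flux_succ n k + mul_flux_sub_flux_succ n k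

lemma two_mul_mul_flux_succ (n k : ℕ) :
    2 * (k * flux n (k + 1)) = k * (n - k) * foldedChoose n k := by
  linear_combination k * flux_add_flux_succ n k - mul_flux_sub_flux_succ n k

lemma signForm_fwdDiff_mul_flux (n : ℕ) (p g : ℕ → ℚ) :
    signForm (n + 1) (Δ_[1] (p * flux n)) g =
      -∑ k ∈ range (n + 1), (p k * flux n k + p (k + 1) * flux n (k + 1)) * g k := by
  rw [signForm_fwdDiff, ← sum_neg_distrib]
  simp only [Pi.mul_apply, flux_zero, flux_last, mul_zero, add_zero, zero_sub, neg_mul]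

lemma sum_range_mul_sq_flux_sub (n : ℕ) (p : ℕ → ℚ) :
    ∑ k ∈ range (n + 1), (p k * flux n k ^ 2 - p (k + 1) * flux n (k + 1) ^ 2) = 0 := by
  rw [sum_range_sub' fun k ↦ p k * flux n k ^ 2, flux_zero, flux_last]
  ring

end Flux

section OddSqMoment

/-- The odd moment `∑ k ^ (2 * r + 1) * v k ^ 2` of the squares of `v = foldedChoose n`. -/
def oddSqMoment (n r : ℕ) : ℚ := ∑ k ∈ range (n + 1), (k : ℚ) ^ (2 * r + 1) * foldedChoose n k ^ 2

lemma nat_mul_mul_sq_foldedChoose (n k : ℕ) :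
    n * (k * foldedChoose n k ^ 2) =
      flux n k ^ 2 - flux n (k + 1) ^ 2 + if k = 0 then (n * foldedChoose n 0) ^ 2 else 0 := by
  rcases eq_or_ne k 0 with rfl | hk
  · simp [flux_zero, flux_one]
  · have diff : flux n k - flux n (k + 1) = k * foldedChoose n k :=
      mul_left_cancel₀ (Nat.cast_ne_zero.2 hk) (by rw [mul_flux_sub_flux_succ]; ring)
    rw [if_neg hk, add_zero, sq_sub_sq, diff, flux_add_flux_succ]
    ring

lemma oddSqMoment_zero (n : ℕ) : oddSqMoment n 0 = n * foldedChoose n 0 ^ 2 := by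
  rcases eq_or_ne n 0 with rfl | hn
  · simp [oddSqMoment]
  refine mul_left_cancel₀ (Nat.cast_ne_zero.2 hn : (n : ℚ) ≠ 0) ?_
  calc (n : ℚ) * oddSqMoment n 0
    _ = ∑ k ∈ range (n + 1), (1 * flux n k ^ 2 - 1 * flux n (k + 1) ^ 2) +
          (n * foldedChoose n 0) ^ 2 := by
      simp [oddSqMoment, mul_sum, nat_mul_mul_sq_foldedChoose, sum_add_distrib]
    _ = n * (n * foldedChoose n 0 ^ 2) := by
      rw [sum_range_mul_sq_flux_sub n fun _ ↦ 1]
      ring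

lemma two_mul_sub_one_mul_oddSqMoment_one (n : ℕ) :
    (2 * n - 1) * oddSqMoment n 1 = n ^ 2 * oddSqMoment n 0 := by
  have telescope := sum_range_mul_sq_flux_sub n fun k ↦ (2 * (k * (k - 1)) : ℚ)
  rw [← sub_eq_zero, ← telescope]
  simp only [oddSqMoment, mul_sum, ← sum_sub_distrib]
  refine sum_congr rfl fun k _ ↦ ?_
  have left := two_mul_mul_flux n k
  have right := two_mul_mul_flux_succ n k
  push_cast
  linear_combination
    -(k - 1) * (flux n k + (n + k) * foldedChoose n k / 2) * left +
      (k + 1) * (flux n (k + 1) + (n - k) * foldedChoose n k / 2) * right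

lemma oddSqMoment_two (n : ℕ) : oddSqMoment n 2 = n * oddSqMoment n 1 := by
  rcases eq_or_ne n 1 with rfl | hn
  · simp [oddSqMoment, sum_range_succ]
  have hn' : (n : ℚ) - 1 ≠ 0 := sub_ne_zero.2 (Nat.cast_ne_one.2 hn)
  refine mul_left_cancel₀ hn' ?_
  have telescope := sum_range_mul_sq_flux_sub n fun k ↦ ((k * (k - 1)) ^ 2 : ℚ)
  rw [← sub_eq_zero, ← telescope]
  simp only [oddSqMoment, mul_sum, ← sum_sub_distrib]
  refine sum_congr rfl fun k _ ↦ ?_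
  have left := two_mul_mul_flux n k
  have right := two_mul_mul_flux_succ n k
  push_cast
  linear_combination
    -(k - 1) ^ 2 * k * (flux n k + (n + k) * foldedChoose n k / 2) * left / 2 +
      (k + 1) ^ 2 * k * (flux n (k + 1) + (n - k) * foldedChoose n k / 2) * right / 2

end OddSqMoment

section FoldedMonomial

/-- The sequence `k ^ (2 * r) * v k`, where `v = foldedChoose n`. -/
def foldedMonomial (n r : ℕ) : ℕ → ℚ := fun k ↦ (k : ℚ) ^ (2 * r) * foldedChoose n k

lemma sq_mul_foldedMonomial (n r : ℕ) :
    (fun k : ℕ ↦ (k : ℚ) ^ 2) * foldedMonomial n r = foldedMonomial n (r + 1) := by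
  ext k
  simp only [foldedMonomial, Pi.mul_apply]
  ring

lemma two_smul_foldedMonomial_one (n : ℕ) :
    (2 : ℚ) • foldedMonomial n 1 =
      (n : ℚ) • foldedMonomial n 0 - Δ_[1] ((fun k : ℕ ↦ (2 * k - 1 : ℚ)) * flux n) := by
  ext k
  simp only [foldedMonomial, fwdDiff, Pi.smul_apply, Pi.sub_apply, Pi.mul_apply, smul_eq_mul]
  push_cast
  linear_combination flux_add_flux_succ n k - 2 * mul_flux_sub_flux_succ n k

lemma two_smul_foldedMonomial_two (n : ℕ) :
    (2 : ℚ) • foldedMonomial n 2 = (3 * n - 1 : ℚ) • foldedMonomial n 1 -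
      Δ_[1] ((fun k : ℕ ↦ (k * (k - 1) * (2 * k - 1) : ℚ)) * flux n) := by
  ext k
  simp only [foldedMonomial, fwdDiff, Pi.smul_apply, Pi.sub_apply, Pi.mul_apply, smul_eq_mul]
  push_cast
  linear_combination 3 * k ^ 2 * flux_add_flux_succ n k -
    (2 * k ^ 2 + 1) * mul_flux_sub_flux_succ n k

lemma two_smul_foldedMonomial_three (n : ℕ) :
    (2 : ℚ) • foldedMonomial n 3 =
      (5 * n - 4 : ℚ) • foldedMonomial n 2 + (n : ℚ) • foldedMonomial n 1 -
        Δ_[1] ((fun k : ℕ ↦ ((k * (k - 1)) ^ 2 * (2 * k - 1) : ℚ)) * flux n) := by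
  ext k
  simp only [foldedMonomial, fwdDiff, Pi.smul_apply, Pi.sub_apply, Pi.add_apply, Pi.mul_apply,
    smul_eq_mul]
  push_cast
  linear_combination (5 * k ^ 4 + k ^ 2) * flux_add_flux_succ n k -
    (2 * k ^ 4 + 4 * k ^ 2) * mul_flux_sub_flux_succ n k

lemma signForm_foldedMonomial_one_zero (n : ℕ) :
    signForm (n + 1) (foldedMonomial n 1) (foldedMonomial n 0) = n * oddSqMoment n 0 := by
  rcases eq_or_ne n 0 with rfl | hn
  · simp [signForm_apply]
  have hn' : (n : ℚ) ≠ 0 := Nat.cast_ne_zero.2 hn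
  have reduced : 2 * signForm (n + 1) (foldedMonomial n 1) (foldedMonomial n 0) =
      ∑ k ∈ range (n + 1), ((2 * k - 1) * flux n k + (2 * (k + 1 : ℕ) - 1) * flux n (k + 1)) *
        foldedMonomial n 0 k := by
    rw [← smul_eq_mul, ← LinearMap.map_smul₂, two_smul_foldedMonomial_one, LinearMap.map_sub₂,
      LinearMap.map_smul₂, (signForm_isAlt _).self_eq_zero, smul_zero, zero_sub,
      signForm_fwdDiff_mul_flux, neg_neg]
  have telescoped : n * ∑ k ∈ range (n + 1),
      ((2 * k - 1) * flux n k + (2 * (k + 1 : ℕ) - 1) * flux n (k + 1)) * foldedMonomial n 0 k =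
        2 * n ^ 2 * oddSqMoment n 0 := by
    rw [← sub_zero (2 * (n : ℚ) ^ 2 * _), ← sum_range_mul_sq_flux_sub n fun _ ↦ 1]
    simp only [oddSqMoment, mul_sum, ← sum_sub_distrib]
    refine sum_congr rfl fun k _ ↦ ?_
    rw [foldedMonomial]
    push_cast
    linear_combination (flux n k - flux n (k + 1) + 2 * k * n * foldedChoose n k) *
      flux_add_flux_succ n k
  refine mul_left_cancel₀ hn' ?_
  linear_combination (n * reduced + telescoped) / 2

lemma two_mul_signForm_foldedMonomial_two (n s : ℕ) :
    2 * signForm (n + 1) (foldedMonomial n 2) (foldedMonomial n s) =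
      (3 * n - 1) * signForm (n + 1) (foldedMonomial n 1) (foldedMonomial n s) +
        n * oddSqMoment n s + (2 * n - 3) * oddSqMoment n (s + 1) := by
  rw [← smul_eq_mul, ← LinearMap.map_smul₂, two_smul_foldedMonomial_two, LinearMap.map_sub₂,
    LinearMap.map_smul₂, signForm_fwdDiff_mul_flux, smul_eq_mul, sub_neg_eq_add, add_assoc]
  congr 1
  simp only [oddSqMoment, mul_sum, ← sum_add_distrib]
  refine sum_congr rfl fun k _ ↦ ?_
  rw [foldedMonomial]
  push_cast
  linear_combination k ^ (2 * s) * foldedChoose n k *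
    ((2 * k ^ 3 + k) * flux_add_flux_succ n k - 3 * k * mul_flux_sub_flux_succ n k)

lemma two_mul_signForm_foldedMonomial_three (n s : ℕ) :
    2 * signForm (n + 1) (foldedMonomial n 3) (foldedMonomial n s) =
      (5 * n - 4) * signForm (n + 1) (foldedMonomial n 2) (foldedMonomial n s) +
        n * signForm (n + 1) (foldedMonomial n 1) (foldedMonomial n s) +
        (4 * n - 1) * oddSqMoment n (s + 1) + (2 * n - 5) * oddSqMoment n (s + 2) := by
  rw [← smul_eq_mul, ← LinearMap.map_smul₂, two_smul_foldedMonomial_three, LinearMap.map_sub₂,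
    LinearMap.map_add₂, LinearMap.map_smul₂, LinearMap.map_smul₂, signForm_fwdDiff_mul_flux,
    smul_eq_mul, smul_eq_mul, sub_neg_eq_add, add_assoc (_ + _)]
  congr 1
  simp only [oddSqMoment, mul_sum, ← sum_add_distrib]
  refine sum_congr rfl fun k _ ↦ ?_
  rw [foldedMonomial]
  push_cast
  linear_combination k ^ (2 * s) * foldedChoose n k *
    ((2 * k ^ 5 + 4 * k ^ 3) * flux_add_flux_succ n k -
      (5 * k ^ 3 + k) * mul_flux_sub_flux_succ n k)

lemma sum_sum_foldedChoose_mul_abs_eq_signForm (n r : ℕ) :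
    ∑ k ∈ range (n + 1), ∑ l ∈ range (n + 1), foldedChoose n k * foldedChoose n l *
        |(k : ℚ) ^ (2 * r) * ((k : ℚ) ^ 2 - (l : ℚ) ^ 2)| =
      signForm (n + 1) (foldedMonomial n (r + 1)) (foldedMonomial n 0) -
        signForm (n + 1) (foldedMonomial n r) (foldedMonomial n 1) := by
  have sq_mono : Monotone fun k : ℕ ↦ (k : ℚ) ^ 2 := fun k l hkl ↦ by simp only; gcongr
  rw [← sq_mul_foldedMonomial n r, ← sq_mul_foldedMonomial n 0,
    ← sum_sum_mul_abs_sub_eq_signForm sq_mono]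
  refine sum_congr rfl fun k _ ↦ sum_congr rfl fun l _ ↦ ?_
  rw [abs_mul, abs_of_nonneg (by positivity : (0 : ℚ) ≤ (k : ℚ) ^ (2 * r)), foldedMonomial,
    foldedMonomial]
  ring

lemma two_mul_sub_one_mul_signForm_sub (n : ℕ) :
    (2 * n - 1) * (signForm (n + 1) (foldedMonomial n 3) (foldedMonomial n 0) -
        signForm (n + 1) (foldedMonomial n 2) (foldedMonomial n 1)) =
      n ^ 3 * (10 * n ^ 2 - 14 * n + 5) * foldedChoose n 0 ^ 2 := by
  have form_one_zero := signForm_foldedMonomial_one_zero n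
  have form_two_zero := two_mul_signForm_foldedMonomial_two n 0
  have form_three_zero := two_mul_signForm_foldedMonomial_three n 0
  have form_two_one := two_mul_signForm_foldedMonomial_two n 1
  rw [(signForm_isAlt _).self_eq_zero] at form_two_one
  have moment_zero := oddSqMoment_zero n
  have moment_one := two_mul_sub_one_mul_oddSqMoment_one n
  have moment_two := oddSqMoment_two n
  rw [moment_zero] at form_one_zero form_two_zero moment_one
  rw [moment_two] at form_two_one form_three_zero
  linear_combination
    (2 * n - 1) * (form_three_zero / 2 + (5 * n - 4) / 4 * form_two_zero - form_two_one / 2) +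
    (2 * n - 1) * ((5 * n - 4) * (3 * n - 1) / 4 + n / 2) * form_one_zero +
    (((5 * n - 4) * (2 * n - 3)) / 4 + (4 * n - 1) / 2 - n - n / 2) * moment_one

end FoldedMonomial

theorem stmt19 (n : ℕ) (hn : 1 ≤ n) :
    ∑ᶠ i : ℤ, ∑ᶠ j : ℤ,
        ((ichoose (2 * n) (n + i) : ℚ) * (ichoose (2 * n) (n + j) : ℚ)
          * |(i : ℚ) ^ 4 * ((i : ℚ) ^ 2 - (j : ℚ) ^ 2)|)
      = (n : ℚ) ^ 3 * (10 * n ^ 2 - 14 * n + 5) / (2 * n - 1)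
          * ((2 * n).choose n : ℚ) ^ 2 := by
  have two_mul_sub_one_ne_zero : (2 * n - 1 : ℚ) ≠ 0 := by
    have : (1 : ℚ) ≤ n := mod_cast hn
    linarith
  have folded := finsum_finsum_ichoose_mul_natAbs n
    fun k l ↦ |(k : ℚ) ^ (2 * 2) * ((k : ℚ) ^ 2 - (l : ℚ) ^ 2)|
  simp only [Nat.cast_natAbs, Int.cast_abs, sq_abs, (by decide : Even (2 * 2)).pow_abs] at folded
  rw [div_mul_eq_mul_div, eq_div_iff two_mul_sub_one_ne_zero, mul_comm, ← foldedChoose_zero,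
    ← two_mul_sub_one_mul_signForm_sub, ← sum_sum_foldedChoose_mul_abs_eq_signForm n 2, ← folded]
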